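/- Let λ > 0 and β ∈ (0,1]. For every n ∈ ℕ₀, ∫_ℝ C_n^{λ,β}(x) dπ_{λ,β}(x) = δ_{n,0}, where δ_{n,0} is the Kronecker delta (i.e. the integral equals 1 if n = 0 and 0 otherwise). -/

import Mathlib

/-!
Write `w k = (λᵏ/k!) E_β⁽ᵏ⁾(-λ)` for the weights of the fractional Poisson measure and
`g(z) = 1/E_β(λz)`. Near `z = 0` one has `exp (k log (1+z)) = (1+z)ᵏ`, so the Leibniz rule gives
`C_n(k) = ∑_j (n choose j) (k)_j g⁽ⁿ⁻ʲ⁾(0)` with falling factorials `(k)_j` (`genAppell_natCast`).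
Taylor expansion of the entire function `E_β⁽ʲ⁾` around `-λ`, evaluated at `0`, yields
`∑_k w k (k)_j = λʲ E_β⁽ʲ⁾(0)` (`hasSum_factorialMoment`). Hence `∑_k w k C_n(k)` is the `n`-th
derivative at `0` of `E_β(λz) g(z) = 1` (`leibniz_mittagLeffler`), and convergence is absolute.

For this sum to be the integral, the weights must be nonnegative, i.e. `x ↦ E_β(-x)` must be
completely monotone (`iteratedDeriv_mittagLefflerR_nonneg`). Since
`E_β⁽ᵏ⁾(-x) = ∑_r m_{r+k} (-x)ʳ/r!` with `m_r = r!/Γ(βr+1)`, it suffices that the functional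
`uʳ ↦ m_r` is nonnegative on polynomials that are nonnegative on `[0, ∞)`: apply it to
`uᵏ ∑_{r ≤ 2J} (-xu)ʳ/r!` and let `J → ∞`. By Euler's limit formula,
`m_r = lim_N N^((1-β)r) ∏_{1 ≤ j ≤ N+1} (βr+j)/(r+j)`, and
`(βr+j)/(r+j) = β + (1-β) j ∫₀¹ uʳ u^(j-1) du` is a moment sequence of a probability law on `[0,1]`.
Positivity of the functional is preserved by such factors, by scaling, and by pointwise limits
(`stieltjesPos_mittagLeffler`).
-/

open MeasureTheory Finset
open scoped ENNReal NNReal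

noncomputable section

/-- The complex Mittag-Leffler function `E_β(z) = ∑ zⁿ / Γ(βn+1)`. -/
def mittagLeffler (β : ℝ) (z : ℂ) : ℂ :=
  ∑' n : ℕ, z ^ n / (Complex.Gamma ((β * n + 1 : ℝ) : ℂ))

/-- The real Mittag-Leffler function `E_β(x) = ∑ xⁿ / Γ(βn+1)`. -/
def mittagLefflerR (β : ℝ) (x : ℝ) : ℝ :=
  ∑' n : ℕ, x ^ n / Real.Gamma (β * n + 1)

/-- The fractional Poisson measure `π_{λ,β} = ∑_k (λᵏ/k!) E_β⁽ᵏ⁾(-λ) δ_k` on `ℝ`. -/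
def fracPoisson (lam β : ℝ) : Measure ℝ :=
  Measure.sum fun k : ℕ =>
    ENNReal.ofReal (lam ^ k / k.factorial * iteratedDeriv k (mittagLefflerR β) (-lam)) •
      Measure.dirac (k : ℝ)

/-- The Poisson measure with rate `μ` on `ℝ`, `π_μ({k}) = (μᵏ/k!) e^{-μ}`. -/
def poissonMeasureR (μ : ℝ) : Measure ℝ :=
  Measure.sum fun k : ℕ =>
    ENNReal.ofReal (μ ^ k / k.factorial * Real.exp (-μ)) • Measure.dirac (k : ℝ)

/-- The generalized Appell polynomials
`C_n^{λ,β}(x) = dⁿ/dzⁿ [e^{x log(1+z)} / E_β(λz)]` at `z = 0`. -/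
def genAppell (lam β : ℝ) (n : ℕ) (x : ℂ) : ℂ :=
  iteratedDeriv n
    (fun z : ℂ => Complex.exp (x * Complex.log (1 + z)) / mittagLeffler β (lam * z)) 0

/-- The Appell polynomials `A_n^{λ,β}(x) = dⁿ/dzⁿ [e^{zx} / E_β(λ(eᶻ-1))]` at `z = 0`. -/
def appell (lam β : ℝ) (n : ℕ) (x : ℂ) : ℂ :=
  iteratedDeriv n
    (fun z : ℂ => Complex.exp (z * x) / mittagLeffler β (lam * (Complex.exp z - 1))) 0

/-- Stirling numbers of the first kind, via `(log(1+z))^k = k! ∑_{n≥k} s(n,k) zⁿ/n!`. -/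
def stirlingFst (n k : ℕ) : ℝ :=
  iteratedDeriv n (fun x : ℝ => (Real.log (1 + x)) ^ k) 0 / k.factorial

/-- Stirling numbers of the second kind, via `(eᶻ-1)^k = k! ∑_{n≥k} S(n,k) zⁿ/n!`. -/
def stirlingSnd (n k : ℕ) : ℝ :=
  iteratedDeriv n (fun x : ℝ => (Real.exp x - 1) ^ k) 0 / k.factorial

/-- The `n`-th moment of the fractional Poisson measure. -/
def fpMoment (lam β : ℝ) (n : ℕ) : ℝ := ∫ x, x ^ n ∂(fracPoisson lam β)

/-- `M̃_{λ,β}(m) = m! λᵐ / Γ(mβ+1)`. -/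
def tildeM (lam β : ℝ) (m : ℕ) : ℝ := m.factorial * lam ^ m / Real.Gamma (m * β + 1)

/-- The (partial exponential) Bell polynomials `B_{n,k}(x₁, …, x_{n-k+1})`. -/
def bellPoly (n k : ℕ) (x : ℕ → ℂ) : ℂ :=
  ∑ j ∈ (Fintype.piFinset fun _ : Fin (n - k + 1) => Finset.range (n + 1)).filter
      (fun j => (∑ i, j i) = k ∧ (∑ i, (i.1 + 1) * j i) = n),
    (n.factorial : ℂ) / (∏ i, ((j i).factorial : ℂ)) *
      ∏ i, (x (i.1 + 1) / ((i.1 + 1).factorial : ℂ)) ^ j i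

/-! ### Entire power series -/

/-- The coefficient sequence `b` has infinite radius of convergence. -/
def EntireCoeff {𝕜 : Type*} [RCLike 𝕜] (b : ℕ → 𝕜) : Prop :=
  ∀ R : ℝ, 0 ≤ R → Summable fun r : ℕ => ‖b r‖ * R ^ r

section PowerSeries

variable {𝕜 : Type*} [RCLike 𝕜] {b : ℕ → 𝕜}

lemma EntireCoeff.summable (hb : EntireCoeff b) (z : 𝕜) : Summable fun r : ℕ => b r * z ^ r := by
  refine Summable.of_norm ?_
  simpa [norm_mul, norm_pow] using hb ‖z‖ (norm_nonneg z)

lemma EntireCoeff.deriv (hb : EntireCoeff b) :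
    EntireCoeff fun r : ℕ => ((r : 𝕜) + 1) * b (r + 1) := by
  intro R hR
  have h := (summable_nat_add_iff 1).2 (hb (2 * (R + 1)) (by positivity))
  refine Summable.of_nonneg_of_le (fun r => by positivity) (fun r => ?_) h
  have h1 : ‖((r : 𝕜) + 1)‖ ≤ 2 ^ (r + 1) := by
    have : ‖((r : 𝕜) + 1)‖ = ((r + 1 : ℕ) : ℝ) := by
      rw [← RCLike.norm_natCast (K := 𝕜)]; push_cast; rfl
    rw [this]
    exact_mod_cast (Nat.lt_two_pow_self (n := r + 1)).le
  have h2 : R ^ r ≤ (R + 1) ^ (r + 1) :=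
    calc R ^ r ≤ (R + 1) ^ r := by gcongr; linarith
      _ ≤ (R + 1) ^ (r + 1) := pow_le_pow_right₀ (by linarith) (by omega)
  rw [norm_mul, mul_pow]
  calc ‖((r : 𝕜) + 1)‖ * ‖b (r + 1)‖ * R ^ r
      ≤ 2 ^ (r + 1) * ‖b (r + 1)‖ * (R + 1) ^ (r + 1) := by gcongr
    _ = _ := by ring

lemma EntireCoeff.hasDerivAt (hb : EntireCoeff b) (z : 𝕜) :
    HasDerivAt (fun z : 𝕜 => ∑' r : ℕ, b r * z ^ r)
      (∑' r : ℕ, ((r : 𝕜) + 1) * b (r + 1) * z ^ r) z := by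
  set R : ℝ := ‖z‖ + 1
  have hR : 0 ≤ R := by positivity
  -- The term of index `0` contributes nothing to the derivative, hence the shift by one.
  have hu : Summable fun r : ℕ => ‖b r‖ * (r * R ^ (r - 1)) := by
    rw [← summable_nat_add_iff 1]
    refine (hb.deriv R hR).congr fun r => ?_
    have : ‖((r : 𝕜) + 1)‖ = (r : ℝ) + 1 := by
      have := RCLike.norm_natCast (K := 𝕜) (r + 1)
      push_cast at this; exact this
    rw [norm_mul, this]
    push_cast
    ring
  have key := hasDerivAt_tsum_of_isPreconnected (𝕜 := 𝕜) (F := 𝕜)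
    (g := fun (r : ℕ) (y : 𝕜) => b r * y ^ r) (g' := fun r y => b r * (r * y ^ (r - 1)))
    (t := Metric.ball (0 : 𝕜) R) (y₀ := 0) (y := z) hu Metric.isOpen_ball
    ((convex_ball (0 : 𝕜) R).isPreconnected)
    (fun r y _ => (hasDerivAt_pow r y).const_mul _)
    (fun r y hy => ?_) (Metric.mem_ball_self (by positivity)) (hb.summable 0)
    (by simp [R])
  · refine key.congr_deriv ?_
    have hs : Summable fun r : ℕ => b r * ((r : 𝕜) * z ^ (r - 1)) := by
      rw [← summable_nat_add_iff 1]
      refine (hb.deriv.summable z).congr fun r => ?_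
      push_cast
      ring
    rw [hs.tsum_eq_zero_add]
    simp only [Nat.cast_zero, zero_mul, mul_zero, zero_add, Nat.add_sub_cancel]
    refine tsum_congr fun r => ?_
    push_cast
    ring
  · rw [norm_mul, norm_mul, norm_pow, RCLike.norm_natCast]
    have : ‖y‖ ≤ R := by simpa using (Metric.mem_ball.1 hy).le
    gcongr

lemma EntireCoeff.iteratedDeriv (hb : EntireCoeff b) (k : ℕ) :
    iteratedDeriv k (fun z : 𝕜 => ∑' r : ℕ, b r * z ^ r) =
      fun z => ∑' r : ℕ, ((r + k).descFactorial k : 𝕜) * b (r + k) * z ^ r := by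
  induction k generalizing b with
  | zero => simp
  | succ k ih =>
    have hd : _root_.deriv (fun z : 𝕜 => ∑' r : ℕ, b r * z ^ r) =
        fun z => ∑' r : ℕ, ((r : 𝕜) + 1) * b (r + 1) * z ^ r :=
      funext fun z => (hb.hasDerivAt z).deriv
    rw [iteratedDeriv_succ', hd, ih hb.deriv]
    funext z
    refine tsum_congr fun r => ?_
    rw [show r + (k + 1) = (r + k) + 1 from rfl, Nat.succ_descFactorial_succ]
    push_cast
    ring

end PowerSeries

/-! ### The Mittag-Leffler function is entire -/

lemma pow_mul_exp_neg_le_Gamma {M y : ℝ} (hM : 0 < M) (hy : 0 ≤ y) :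
    M ^ y * Real.exp (-M) ≤ Real.Gamma (y + 1) := by
  have hint := Real.GammaIntegral_convergent (s := y + 1) (by linarith)
  rw [Real.Gamma_eq_integral (by linarith), ← integral_exp_neg_Ioi, ← integral_const_mul]
  calc ∫ t in Set.Ioi M, M ^ y * Real.exp (-t)
      ≤ ∫ t in Set.Ioi M, Real.exp (-t) * t ^ (y + 1 - 1) := by
        refine setIntegral_mono_on ?_ ?_ measurableSet_Ioi fun t ht => ?_
        · exact (integrableOn_exp_neg_Ioi M).const_mul _
        · exact hint.mono_set (Set.Ioi_subset_Ioi hM.le)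
        · rw [mul_comm, add_sub_cancel_right]
          have := Set.mem_Ioi.1 ht
          gcongr
    _ ≤ _ := by
        refine setIntegral_mono_set hint ?_ (Set.Ioi_subset_Ioi hM.le).eventuallyLE
        filter_upwards [ae_restrict_mem measurableSet_Ioi] with t ht
        have := Set.mem_Ioi.1 ht
        simp only [Pi.zero_apply]
        positivity

/-- The Taylor coefficients `1 / Γ(βr+1)` of the Mittag-Leffler function. -/
def mlCoeff (β : ℝ) (r : ℕ) : ℝ := (Real.Gamma (β * r + 1))⁻¹

lemma mlCoeff_pos {β : ℝ} (hβ : 0 < β) (r : ℕ) : 0 < mlCoeff β r :=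
  inv_pos.2 (Real.Gamma_pos_of_pos (by positivity))

lemma entireCoeff_mlCoeff {β : ℝ} (hβ : 0 < β) : EntireCoeff (mlCoeff β) := by
  intro R hR
  -- `M` is chosen such that `M ^ β = 2 (R + 1)`, which beats `R ^ r` geometrically.
  set M : ℝ := (2 * (R + 1)) ^ β⁻¹
  have hM : 0 < M := by positivity
  refine Summable.of_nonneg_of_le (fun r => by positivity) (fun r => ?_)
    ((summable_geometric_of_lt_one (r := (1 / 2 : ℝ)) (by norm_num) (by norm_num)).mul_left
      (Real.exp M))
  have h := pow_mul_exp_neg_le_Gamma hM (y := β * r) (by positivity)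
  have hMr : M ^ (β * r) = (2 * (R + 1)) ^ r := by
    rw [Real.rpow_mul hM.le, ← Real.rpow_mul (x := 2 * (R + 1)) (by positivity), inv_mul_cancel₀ hβ.ne',
      Real.rpow_one, Real.rpow_natCast]
  rw [hMr] at h
  rw [Real.norm_of_nonneg (mlCoeff_pos hβ r).le, mlCoeff]
  calc (Real.Gamma (β * r + 1))⁻¹ * R ^ r
      ≤ ((2 * (R + 1)) ^ r * Real.exp (-M))⁻¹ * (R + 1) ^ r := by
        gcongr; linarith
    _ = _ := by
        rw [Real.exp_neg, mul_pow, one_div, inv_pow]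
        field_simp

lemma entireCoeff_mlCoeff_complex {β : ℝ} (hβ : 0 < β) :
    EntireCoeff fun r => (mlCoeff β r : ℂ) := by
  intro R hR
  simpa using entireCoeff_mlCoeff hβ R hR

lemma mittagLeffler_eq (β : ℝ) :
    mittagLeffler β = fun z => ∑' r : ℕ, (mlCoeff β r : ℂ) * z ^ r := by
  funext z
  refine tsum_congr fun r => ?_
  rw [Complex.Gamma_ofReal, mlCoeff, Complex.ofReal_inv]
  ring

lemma mittagLefflerR_eq (β : ℝ) :
    mittagLefflerR β = fun x => ∑' r : ℕ, mlCoeff β r * x ^ r := by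
  funext x
  refine tsum_congr fun r => ?_
  rw [mlCoeff]
  ring

lemma iteratedDeriv_mittagLefflerR {β : ℝ} (hβ : 0 < β) (k : ℕ) (x : ℝ) :
    iteratedDeriv k (mittagLefflerR β) x =
      ∑' r : ℕ, ((r + k).descFactorial k : ℝ) * mlCoeff β (r + k) * x ^ r := by
  rw [mittagLefflerR_eq, (entireCoeff_mlCoeff hβ).iteratedDeriv]

lemma iteratedDeriv_mittagLeffler_ofReal {β : ℝ} (hβ : 0 < β) (k : ℕ) (x : ℝ) :
    iteratedDeriv k (mittagLeffler β) x = (iteratedDeriv k (mittagLefflerR β) x : ℝ) := by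
  rw [iteratedDeriv_mittagLefflerR hβ, mittagLeffler_eq,
    (entireCoeff_mlCoeff_complex hβ).iteratedDeriv]
  push_cast
  rfl

lemma differentiable_mittagLeffler {β : ℝ} (hβ : 0 < β) :
    Differentiable ℂ (mittagLeffler β) := by
  rw [mittagLeffler_eq]
  exact fun z => ((entireCoeff_mlCoeff_complex hβ).hasDerivAt z).differentiableAt

lemma mittagLeffler_zero (β : ℝ) : mittagLeffler β 0 = 1 := by
  rw [mittagLeffler_eq]
  beta_reduce
  rw [tsum_eq_single 0 (fun r hr => by simp [hr])]
  simp [mlCoeff]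

/-! ### Complete monotonicity of the Mittag-Leffler function -/

/-- Positivity of the functional `xⁱ ↦ a i` on polynomials that are nonnegative on `[0, ∞)`.
This is M. Riesz' criterion for `a` to be the moment sequence of a measure on `[0, ∞)`. -/
def StieltjesPos (a : ℕ → ℝ) : Prop :=
  ∀ (N : ℕ) (c : ℕ → ℝ), (∀ x : ℝ, 0 ≤ x → 0 ≤ ∑ i ∈ range N, c i * x ^ i) →
    0 ≤ ∑ i ∈ range N, c i * a i

lemma stieltjesPos_one : StieltjesPos fun _ => 1 := fun N c h => by
  simpa using h 1 zero_le_one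

lemma StieltjesPos.scale {a : ℕ → ℝ} (ha : StieltjesPos a) {s : ℝ} (hs : 0 ≤ s) :
    StieltjesPos fun i => s ^ i * a i := fun N c h => by
  have := ha N (fun i => c i * s ^ i) fun x hx => by
    simpa [mul_pow, mul_assoc] using h (s * x) (by positivity)
  simpa [mul_assoc] using this

/-- Multiplication by `(βi+1+j)/(i+1+j)` preserves Stieltjes positivity: this factor is the `i`-th
moment of the law `β δ₁ + (1-β) (j+1) uʲ du` on `[0,1]`, and a product of moment sequences
is the moment sequence of a product of independent variables. -/
lemma StieltjesPos.mul_factor {a : ℕ → ℝ} (ha : StieltjesPos a) {β : ℝ} (hβ0 : 0 < β)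
    (hβ1 : β ≤ 1) (j : ℕ) :
    StieltjesPos fun i => a i * ((β * i + 1 + j) / (i + 1 + j)) := fun N c h => by
  have hI : 0 ≤ ∫ u in (0 : ℝ)..1, ∑ i ∈ range N, c i * (u ^ i * a i) * u ^ j := by
    refine intervalIntegral.integral_nonneg zero_le_one fun u hu => ?_
    rw [← sum_mul]
    exact mul_nonneg (ha.scale hu.1 N c h) (pow_nonneg hu.1 j)
  have hIe : ∫ u in (0 : ℝ)..1, ∑ i ∈ range N, c i * (u ^ i * a i) * u ^ j =
      ∑ i ∈ range N, c i * a i / (i + j + 1) := by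
    rw [intervalIntegral.integral_finsetSum fun i _ =>
      (by fun_prop : Continuous fun u : ℝ => c i * (u ^ i * a i) * u ^ j).intervalIntegrable _ _]
    refine sum_congr rfl fun i _ => ?_
    have : (fun u : ℝ => c i * (u ^ i * a i) * u ^ j) = fun u => (c i * a i) * u ^ (i + j) := by
      funext u; rw [pow_add]; ring
    rw [this, intervalIntegral.integral_const_mul, integral_pow]
    simp
    ring
  rw [hIe] at hI
  have h0 := ha N c h
  have : ∑ i ∈ range N, c i * (a i * ((β * i + 1 + j) / (i + 1 + j))) =
      β * ∑ i ∈ range N, c i * a i +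
        (1 - β) * (j + 1) * ∑ i ∈ range N, c i * a i / (i + j + 1) := by
    rw [mul_sum, mul_sum, ← sum_add_distrib]
    refine sum_congr rfl fun i _ => ?_
    have h1 : (i + 1 + j : ℝ) ≠ 0 := by positivity
    have h2 : (i + j + 1 : ℝ) ≠ 0 := by positivity
    field_simp
    ring
  rw [this]
  have : 0 ≤ 1 - β := by linarith
  positivity

lemma StieltjesPos.of_tendsto {a : ℕ → ℕ → ℝ} {l : ℕ → ℝ} (ha : ∀ n, StieltjesPos (a n))
    (hl : ∀ i, Filter.Tendsto (fun n => a n i) Filter.atTop (nhds (l i))) :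
    StieltjesPos l := fun N c h =>
  ge_of_tendsto' (tendsto_finsetSum _ fun i _ => (hl i).const_mul (c i)) fun n => ha n N c h

/-- `i! / Γ(βi+1)` is a Stieltjes moment sequence, being a limit of products of such sequences by
Euler's limit formula for `Γ`. -/
lemma stieltjesPos_mittagLeffler {β : ℝ} (hβ0 : 0 < β) (hβ1 : β ≤ 1) :
    StieltjesPos fun i => (i.factorial : ℝ) * mlCoeff β i := by
  have hprod : ∀ n : ℕ, StieltjesPos fun i =>
      ∏ j ∈ range n, ((β * i + 1 + j) / (i + 1 + j) : ℝ) := by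
    intro n
    induction n with
    | zero => simpa using stieltjesPos_one
    | succ n ih =>
      simp only [prod_range_succ]
      exact ih.mul_factor hβ0 hβ1 n
  refine StieltjesPos.of_tendsto (a := fun n i => (((n + 1 : ℕ) : ℝ) ^ (1 - β)) ^ i *
    ∏ j ∈ range (n + 2), ((β * i + 1 + j) / (i + 1 + j) : ℝ))
    (fun n => (hprod (n + 2)).scale (by positivity)) fun i => ?_
  have h1 := (Real.GammaSeq_tendsto_Gamma ((i : ℝ) + 1)).comp (Filter.tendsto_add_atTop_nat 1)
  have h2 := (Real.GammaSeq_tendsto_Gamma (β * i + 1)).comp (Filter.tendsto_add_atTop_nat 1)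
  have hG : Real.Gamma (β * i + 1) ≠ 0 := (Real.Gamma_pos_of_pos (by positivity)).ne'
  have h := h1.div h2 hG
  rw [Real.Gamma_nat_eq_factorial, div_eq_mul_inv] at h
  refine h.congr fun n => ?_
  change Real.GammaSeq _ (n + 1) / Real.GammaSeq _ (n + 1) = _
  simp only [Real.GammaSeq]
  have hn : (0 : ℝ) < ((n + 1 : ℕ) : ℝ) := by positivity
  have hf : ((n + 1).factorial : ℝ) ≠ 0 := by positivity
  have hp1 : ∏ j ∈ range (n + 1 + 1), ((i : ℝ) + 1 + j) ≠ 0 :=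
    prod_ne_zero_iff.2 fun j _ => by positivity
  have hp2 : ∏ j ∈ range (n + 1 + 1), (β * i + 1 + j : ℝ) ≠ 0 :=
    prod_ne_zero_iff.2 fun j _ => by positivity
  have hpow : ((n + 1 : ℕ) : ℝ) ^ ((i : ℝ) + 1) =
      (((n + 1 : ℕ) : ℝ) ^ (1 - β)) ^ i * ((n + 1 : ℕ) : ℝ) ^ (β * i + 1) := by
    rw [← Real.rpow_natCast, ← Real.rpow_mul hn.le, ← Real.rpow_add hn]
    congr 1; ring
  have hp3 : ((n + 1 : ℕ) : ℝ) ^ (β * i + 1) ≠ 0 := by positivity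
  rw [prod_div_distrib, hpow]
  field_simp

/-- Truncations of the exponential series at `-y` alternate around `exp (-y)`. -/
lemma exp_truncation_sign (m : ℕ) : ∀ y : ℝ, 0 ≤ y →
    0 ≤ (-1) ^ m * (∑ r ∈ range (m + 1), (-y) ^ r / r.factorial - Real.exp (-y)) := by
  induction m with
  | zero => intro y hy; simpa using hy
  | succ m ih =>
    set F : ℝ → ℝ := fun y =>
      (-1) ^ (m + 1) * (∑ r ∈ range (m + 1 + 1), (-y) ^ r / r.factorial - Real.exp (-y))
    have hF : ∀ y : ℝ, HasDerivAt F
        ((-1) ^ m * (∑ r ∈ range (m + 1), (-y) ^ r / r.factorial - Real.exp (-y))) y := by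
      intro y
      have hs : HasDerivAt (fun y : ℝ => ∑ r ∈ range (m + 1 + 1), (-y) ^ r / (r.factorial : ℝ))
          (∑ r ∈ range (m + 1 + 1), (r * (-y) ^ (r - 1) * (-1)) / (r.factorial : ℝ)) y :=
        HasDerivAt.fun_sum fun r _ => ((hasDerivAt_neg y).pow r).div_const _
      have he : HasDerivAt (fun y : ℝ => Real.exp (-y)) (Real.exp (-y) * (-1)) y :=
        (hasDerivAt_neg y).exp
      refine ((hs.sub he).const_mul ((-1) ^ (m + 1))).congr_deriv ?_
      rw [sum_range_succ']
      have : ∑ r ∈ range (m + 1), (((r + 1 : ℕ) : ℝ) * (-y) ^ (r + 1 - 1) * (-1)) /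
          ((r + 1).factorial : ℝ) = -∑ r ∈ range (m + 1), (-y) ^ r / (r.factorial : ℝ) := by
        rw [← sum_neg_distrib]
        refine sum_congr rfl fun r _ => ?_
        have : (r.factorial : ℝ) ≠ 0 := by positivity
        have : ((r : ℝ) + 1) ≠ 0 := by positivity
        rw [Nat.factorial_succ]
        push_cast
        field_simp
      rw [this]
      simp
      ring
    have hmono : MonotoneOn F (Set.Ici 0) := by
      refine monotoneOn_of_deriv_nonneg (convex_Ici 0)
        (fun y _ => (hF y).continuousAt.continuousWithinAt)
        (fun y _ => (hF y).differentiableAt.differentiableWithinAt) fun y hy => ?_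
      rw [(hF y).deriv]
      rw [interior_Ici] at hy
      exact ih y (Set.mem_Ioi.1 hy).le
    intro y hy
    have h0 : F 0 = 0 := by
      simp [F, sum_range_succ']
    calc 0 = F 0 := h0.symm
      _ ≤ F y := hmono (by simp) hy hy

lemma exp_truncation_nonneg (J : ℕ) {y : ℝ} (hy : 0 ≤ y) :
    0 ≤ ∑ r ∈ range (2 * J + 1), (-y) ^ r / (r.factorial : ℝ) := by
  have h := exp_truncation_sign (2 * J) y hy
  rw [pow_mul] at h
  norm_num at h
  exact (Real.exp_pos _).le.trans h

/-- Complete monotonicity: `E_β⁽ᵏ⁾(-x)` is the limit of the moment functional applied to the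
polynomials `uᵏ ∑_{r ≤ 2J} (-xu)ʳ/r!`, which are nonnegative for `u ≥ 0`. -/
lemma iteratedDeriv_mittagLefflerR_nonneg {β : ℝ} (hβ0 : 0 < β) (hβ1 : β ≤ 1) (k : ℕ) {x : ℝ}
    (hx : 0 ≤ x) : 0 ≤ iteratedDeriv k (mittagLefflerR β) (-x) := by
  have hs : Summable fun r : ℕ =>
      ((r + k).descFactorial k : ℝ) * mlCoeff β (r + k) * (-x) ^ r := by
    have : ∀ (b : ℕ → ℝ) (k : ℕ), EntireCoeff b →
        EntireCoeff fun r => ((r + k).descFactorial k : ℝ) * b (r + k) := by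
      intro b k hb
      induction k generalizing b with
      | zero => simpa using hb
      | succ k ih =>
        convert ih _ hb.deriv using 2 with r
        rw [show r + (k + 1) = (r + k) + 1 from rfl, Nat.succ_descFactorial_succ]
        push_cast
        ring
    exact (this _ k (entireCoeff_mlCoeff hβ0)).summable (-x)
  rw [iteratedDeriv_mittagLefflerR hβ0]
  have ht : Filter.Tendsto (fun J : ℕ => 2 * J + 1) Filter.atTop Filter.atTop :=
    Filter.tendsto_atTop_mono (fun J => by simp only [id]; omega) Filter.tendsto_id
  refine ge_of_tendsto' (hs.hasSum.tendsto_sum_nat.comp ht) fun J => ?_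
  simp only [Function.comp_apply]
  have := stieltjesPos_mittagLeffler hβ0 hβ1 (k + (2 * J + 1))
    (fun i => if k ≤ i then (-x) ^ (i - k) / ((i - k).factorial : ℝ) else 0) fun u hu => ?_
  · rw [sum_range_add, sum_eq_zero (fun i hi => by simp [mem_range.1 hi]), zero_add] at this
    refine this.trans_eq (sum_congr rfl fun r _ => ?_)
    have hd := Nat.factorial_mul_descFactorial (n := r + k) (k := k) (by omega)
    rw [Nat.add_sub_cancel] at hd
    have hr : (r.factorial : ℝ) ≠ 0 := by positivity
    beta_reduce
    rw [add_comm k r, ← hd, if_pos (Nat.le_add_left k r), Nat.add_sub_cancel]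
    push_cast
    field_simp
  · rw [sum_range_add, sum_eq_zero (fun i hi => by simp [mem_range.1 hi]), zero_add]
    have h := mul_nonneg (pow_nonneg hu k) (exp_truncation_nonneg J (mul_nonneg hx hu))
    rw [mul_sum] at h
    refine h.trans_eq (sum_congr rfl fun r _ => ?_)
    simp only [Nat.le_add_right, if_true, Nat.add_sub_cancel_left]
    rw [pow_add, ← neg_mul, mul_pow]
    ring

/-! ### Factorial moments and the biorthogonality computation -/

/-- The weight `(λᵏ/k!) E_β⁽ᵏ⁾(-λ)` of the fractional Poisson measure at `k`. -/
def fpWeight (lam β : ℝ) (k : ℕ) : ℝ :=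
  lam ^ k / k.factorial * iteratedDeriv k (mittagLefflerR β) (-lam)

/-- The `j`-th factorial moment is `λʲ E_β⁽ʲ⁾(0)`: this is the Taylor expansion of `E_β⁽ʲ⁾` around
`-λ`, evaluated at `0`. -/
lemma hasSum_factorialMoment {lam β : ℝ} (hβ : 0 < β) (j : ℕ) :
    HasSum (fun k : ℕ => (fpWeight lam β k : ℂ) * (k.descFactorial j : ℂ))
      ((lam : ℂ) ^ j * iteratedDeriv j (mittagLeffler β) 0) := by
  have hd : Differentiable ℂ (iteratedDeriv j (mittagLeffler β)) :=
    (differentiable_mittagLeffler hβ).contDiff.differentiable_iteratedDeriv j (n := ⊤)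
      (by exact_mod_cast WithTop.coe_lt_top _)
  have h := (Complex.hasSum_taylorSeries_of_entire hd ((-lam : ℝ) : ℂ) 0).mul_left ((lam : ℂ) ^ j)
  rw [← hasSum_nat_add_iff' j, sum_eq_zero (fun k hk => by
    rw [Nat.descFactorial_of_lt (mem_range.1 hk)]; simp), sub_zero]
  refine h.congr_fun fun k => ?_
  have hit : iteratedDeriv k (iteratedDeriv j (mittagLeffler β)) ((-lam : ℝ) : ℂ) =
      (iteratedDeriv (k + j) (mittagLefflerR β) (-lam) : ℝ) := by
    rw [← iteratedDeriv_mittagLeffler_ofReal hβ, iteratedDeriv_eq_iterate,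
      iteratedDeriv_eq_iterate, iteratedDeriv_eq_iterate, Function.iterate_add_apply]
  rw [hit, fpWeight]
  have hdf := Nat.factorial_mul_descFactorial (n := k + j) (k := j) (by omega)
  rw [Nat.add_sub_cancel] at hdf
  have hk : (k.factorial : ℂ) ≠ 0 := by exact_mod_cast k.factorial_ne_zero
  have hdz : ((k + j).descFactorial j : ℂ) ≠ 0 := by
    exact_mod_cast (Nat.descFactorial_pos.2 (by omega)).ne'
  rw [← hdf]
  push_cast
  simp only [smul_eq_mul, zero_sub, neg_neg]
  field_simp
  ring

lemma contDiff_mittagLeffler {β : ℝ} (hβ : 0 < β) {n : WithTop ℕ∞} :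
    ContDiff ℂ n (mittagLeffler β) := (differentiable_mittagLeffler hβ).contDiff

lemma contDiffAt_inv_mittagLeffler (lam : ℝ) {β : ℝ} (hβ : 0 < β) {n : WithTop ℕ∞} :
    ContDiffAt ℂ n (fun z : ℂ => (mittagLeffler β (lam * z))⁻¹) 0 := by
  refine ContDiffAt.inv ?_ (by simp [mittagLeffler_zero])
  exact ((contDiff_mittagLeffler hβ).comp (contDiff_const.mul contDiff_id)).contDiffAt

/-- The Leibniz rule, using `exp (k log (1+z)) = (1+z)ᵏ` near `0`. -/
lemma genAppell_natCast {lam β : ℝ} (hβ : 0 < β) (n k : ℕ) :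
    genAppell lam β n (k : ℂ) = ∑ j ∈ range (n + 1),
      (n.choose j : ℂ) * (k.descFactorial j : ℂ) *
        iteratedDeriv (n - j) (fun z : ℂ => (mittagLeffler β (lam * z))⁻¹) 0 := by
  have heq : (fun z : ℂ => Complex.exp (k * Complex.log (1 + z)) / mittagLeffler β (lam * z))
      =ᶠ[nhds 0] (fun z : ℂ => (1 + z) ^ k) * fun z : ℂ => (mittagLeffler β (lam * z))⁻¹ := by
    have : ∀ᶠ z : ℂ in nhds 0, 1 + z ≠ 0 :=
      (by fun_prop : Continuous fun z : ℂ => 1 + z).continuousAt.eventually_ne (by simp)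
    filter_upwards [this] with z hz
    rw [Complex.exp_nat_mul, Complex.exp_log hz, Pi.mul_apply, div_eq_mul_inv]
  rw [genAppell, heq.iteratedDeriv_eq,
    iteratedDeriv_mul (by fun_prop) (contDiffAt_inv_mittagLeffler lam hβ)]
  refine sum_congr rfl fun j _ => ?_
  have : iteratedDeriv j (fun z : ℂ => (1 + z) ^ k) 0 = k.descFactorial j := by
    rw [iteratedDeriv_comp_const_add (f := fun z : ℂ => z ^ k) j 1]
    simp
  rw [this]

/-- The Leibniz rule for `E_β(λz) · (1/E_β(λz)) = 1` near `0`. -/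
lemma leibniz_mittagLeffler {lam β : ℝ} (hβ : 0 < β) (n : ℕ) :
    ∑ j ∈ range (n + 1), (n.choose j : ℂ) * ((lam : ℂ) ^ j * iteratedDeriv j (mittagLeffler β) 0) *
        iteratedDeriv (n - j) (fun z : ℂ => (mittagLeffler β (lam * z))⁻¹) 0 =
      if n = 0 then 1 else 0 := by
  have hc : ContDiff ℂ n (fun z : ℂ => mittagLeffler β (lam * z)) :=
    (contDiff_mittagLeffler hβ).comp (contDiff_const.mul contDiff_id)
  have heq : (fun z : ℂ => mittagLeffler β (lam * z)) * (fun z => (mittagLeffler β (lam * z))⁻¹)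
      =ᶠ[nhds 0] fun _ => 1 := by
    filter_upwards [hc.continuous.continuousAt.eventually_ne
      (by simp [mittagLeffler_zero] : mittagLeffler β (lam * 0) ≠ 0)] with z hz
    exact mul_inv_cancel₀ hz
  have h := heq.iteratedDeriv_eq n
  rw [iteratedDeriv_mul hc.contDiffAt (contDiffAt_inv_mittagLeffler lam hβ),
    iteratedDeriv_const] at h
  rw [← h]
  refine sum_congr rfl fun j _ => ?_
  rw [iteratedDeriv_comp_const_mul (contDiff_mittagLeffler hβ)]
  simp

theorem stmt8 (lam β : ℝ) (hlam : 0 < lam) (hβ0 : 0 < β) (hβ1 : β ≤ 1) (n : ℕ) :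
    (∫ x : ℝ, genAppell lam β n x ∂(fracPoisson lam β)) =
      if n = 0 then 1 else 0 := by
  have hw : ∀ k, 0 ≤ fpWeight lam β k := fun k =>
    mul_nonneg (by positivity) (iteratedDeriv_mittagLefflerR_nonneg hβ0 hβ1 k hlam.le)
  have hsum : HasSum (fun k : ℕ => (fpWeight lam β k : ℂ) * genAppell lam β n (k : ℂ))
      (if n = 0 then 1 else 0) := by
    rw [← leibniz_mittagLeffler (lam := lam) hβ0 n]
    have := hasSum_sum fun j (_ : j ∈ range (n + 1)) =>
      ((hasSum_factorialMoment (lam := lam) hβ0 j).mul_left (n.choose j : ℂ)).mul_right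
        (iteratedDeriv (n - j) (fun z : ℂ => (mittagLeffler β (lam * z))⁻¹) 0)
    refine this.congr_fun fun k => ?_
    rw [genAppell_natCast hβ0, mul_sum]
    exact sum_congr rfl fun j _ => by ring
  have hint : HasSum (fun k : ℕ => (ENNReal.ofReal (fpWeight lam β k)).toReal •
      genAppell lam β n ((k : ℝ) : ℂ)) (∫ x : ℝ, genAppell lam β n x ∂(fracPoisson lam β)) := by
    refine hasSum_integral_sum_dirac (f := fun x : ℝ => genAppell lam β n x) (by simp) ?_
    refine hsum.summable.norm.congr fun k => ?_
    rw [ENNReal.toReal_ofReal (hw k), norm_mul, Complex.norm_of_nonneg (hw k),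
      Complex.ofReal_natCast]
  refine hint.unique (hsum.congr_fun fun k => ?_)
  rw [ENNReal.toReal_ofReal (hw k), Complex.real_smul, Complex.ofReal_natCast]
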